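/- There exists δ > 0 such that for every real number x with |x| < δ, one has ₂F₁(1/4, 7/12; 4/3; x(x+4)³/(4(2x−1)³)) = 4(1−2x)^{3/4}/(4+x), where (1−2x)^{3/4} denotes the positive real power. -/

import Mathlib

open Complex Real

/-- The Pochhammer symbol `(a)ₖ = a(a+1)⋯(a+k−1)`. -/
noncomputable def poch (a : ℂ) (k : ℕ) : ℂ := ∏ i ∈ Finset.range k, (a + i)

/-- The generalized hypergeometric series
`ₙFₙ₋₁(a₁,…,aₙ; b₂,…,bₙ; z) = ∑ₖ (a₁)ₖ⋯(aₙ)ₖ / ((1)ₖ(b₂)ₖ⋯(bₙ)ₖ) · zᵏ`. -/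
noncomputable def hypF (upper lower : List ℂ) (z : ℂ) : ℂ :=
  ∑' k : ℕ, (upper.map fun a => poch a k).prod
    / (poch 1 k * (lower.map fun b => poch b k).prod) * z ^ k

/-!
Let `φ(x) = x(x + 4)³ / (4(2x - 1)³)`. Since `1 - φ(x) = -(x² - 10x - 2)² / (4(2x - 1)³)` and
`φ'(x) = (x + 4)²(x² - 10x - 2) / (2(2x - 1)⁴)`, pulling the hypergeometric equation back along `φ`
gives an equation whose singular point at `0` is regular, with exponents `0` and `-1/3`. As no
positive integer is an exponent, a solution that is analytic at `0` is determined near `0` by its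
value there: the leading coefficient of a nonzero solution vanishing at `0` would violate the
indicial equation. Both `₂F₁(1/4, 7/12; 4/3; φ(x))` and `4(1 - 2x)^{3/4} / (4 + x)` are analytic
solutions with value `1` at `0`.
-/

open Filter Topology FormalMultilinearSeries
open scoped ENNReal

section PowerSeries

variable {𝕜 : Type*} [NontriviallyNormedField 𝕜]

theorem hasSum_of_hasFPowerSeriesOnBall_ofScalars {f : 𝕜 → 𝕜} {a : ℕ → 𝕜} {r : ℝ≥0∞}
    (hf : HasFPowerSeriesOnBall f (ofScalars 𝕜 a) 0 r) {z : 𝕜} (hz : z ∈ Metric.eball 0 r) :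
    HasSum (fun n => a n * z ^ n) (f z) := by
  simpa [mul_comm] using hf.hasSum hz

theorem hasFPowerSeriesOnBall_deriv_ofScalars [CompleteSpace 𝕜] {f : 𝕜 → 𝕜} {a : ℕ → 𝕜} {x : 𝕜}
    {r : ℝ≥0∞} (hf : HasFPowerSeriesOnBall f (ofScalars 𝕜 a) x r) :
    HasFPowerSeriesOnBall (deriv f) (ofScalars 𝕜 fun n => (n + 1) * a (n + 1)) x r := by
  convert (ContinuousLinearMap.apply 𝕜 𝕜 (1 : 𝕜)).comp_hasFPowerSeriesOnBall hf.fderiv using 1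
  · rfl
  ext n : 1
  rw [← mkPiRing_coeff_eq (ofScalars 𝕜 _), coeff_ofScalars, ← mkPiRing_coeff_eq
    (ContinuousLinearMap.compFormalMultilinearSeries _ _)]
  congr 1
  have := derivSeries_coeff_one (ofScalars 𝕜 a) n
  rw [coeff_ofScalars, nsmul_eq_mul] at this
  push_cast at this
  exact this.symm

theorem hasSum_mul_pow_of_succ {a : ℕ → 𝕜} {z s : 𝕜} (ha : a 0 = 0)
    (hs : HasSum (fun n => a (n + 1) * z ^ n) s) : HasSum (fun n => a n * z ^ n) (z * s) := by
  rw [← hasSum_nat_add_iff' 1]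
  simpa [ha, pow_succ', mul_left_comm] using hs.mul_left z

end PowerSeries

section HypergeometricEquation

/-- The left-hand side of Gauss's hypergeometric equation
`z(1 - z)y'' + (c - (a + b + 1)z)y' - aby = 0`. -/
noncomputable def hypergeometricOp {𝕜 : Type*} [NontriviallyNormedField 𝕜] (a b c : 𝕜)
    (y : 𝕜 → 𝕜) (z : 𝕜) : 𝕜 :=
  z * (1 - z) * deriv (deriv y) z + (c - (a + b + 1) * z) * deriv y z - a * b * y z

variable {𝕂 : Type*} [RCLike 𝕂]

theorem one_le_radius_ordinaryHypergeometricSeries (a b c : 𝕂) :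
    1 ≤ (ordinaryHypergeometricSeries 𝕂 a b c).radius := by
  by_cases! h : ∀ k : ℕ, (k : 𝕂) ≠ -a ∧ (k : 𝕂) ≠ -b ∧ (k : 𝕂) ≠ -c
  · exact (ordinaryHypergeometricSeries_radius_eq_one 𝕂 a b c h).ge
  · obtain ⟨k, hk⟩ := h
    have hradius : (ordinaryHypergeometricSeries 𝕂 a b c).radius = ⊤ :=
      radius_eq_top_of_forall_image_add_eq_zero _ (1 + k) fun n =>
        ordinaryHypergeometricSeries_eq_zero_of_neg_nat a b c (by tauto) (by lia)
    exact hradius ▸ le_top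

theorem hasFPowerSeriesOnBall_ordinaryHypergeometric (a b c : 𝕂) :
    HasFPowerSeriesOnBall (₂F₁ a b c : 𝕂 → 𝕂)
      (ofScalars 𝕂 (ordinaryHypergeometricCoefficient a b c)) 0 1 := by
  have hradius := one_le_radius_ordinaryHypergeometricSeries a b c
  exact (FormalMultilinearSeries.hasFPowerSeriesOnBall _ (one_pos.trans_le hradius)).mono one_pos
    hradius

theorem analyticAt_ordinaryHypergeometric {a b c z : 𝕂} (hz : ‖z‖ < 1) :
    AnalyticAt 𝕂 (₂F₁ a b c) z :=
  (hasFPowerSeriesOnBall_ordinaryHypergeometric a b c).analyticAt_of_mem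
    (by simpa [← ofReal_norm] using hz)

theorem ordinaryHypergeometricCoefficient_succ (a b : 𝕂) {c : 𝕂} (hc : ∀ n : ℕ, c ≠ -n) (n : ℕ) :
    (n + 1) * (c + n) * ordinaryHypergeometricCoefficient a b c (n + 1) =
      (a + n) * (b + n) * ordinaryHypergeometricCoefficient a b c n := by
  have hcn : c + n ≠ 0 := fun h => hc n (eq_neg_of_add_eq_zero_left h)
  have hn : (n + 1 : 𝕂) ≠ 0 := n.cast_add_one_ne_zero
  simp only [ordinaryHypergeometricCoefficient, ascPochhammer_succ_eval, Nat.factorial_succ,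
    Nat.cast_mul, Nat.cast_succ, mul_inv]
  field_simp

theorem hypergeometricOp_ordinaryHypergeometric (a b : 𝕂) {c : 𝕂} (hc : ∀ n : ℕ, c ≠ -n) {z : 𝕂}
    (hz : ‖z‖ < 1) : hypergeometricOp a b c (₂F₁ a b c) z = 0 := by
  set u := ordinaryHypergeometricCoefficient a b c
  have hz' : z ∈ Metric.eball (0 : 𝕂) 1 := by simpa [← ofReal_norm] using hz
  have hF := hasFPowerSeriesOnBall_ordinaryHypergeometric a b c
  have hF' := hasFPowerSeriesOnBall_deriv_ofScalars hF
  have hF'' := hasFPowerSeriesOnBall_deriv_ofScalars hF'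
  have sum₀ := hasSum_of_hasFPowerSeriesOnBall_ofScalars hF hz'
  have sum₁ := hasSum_of_hasFPowerSeriesOnBall_ofScalars hF' hz'
  have sum₂ := hasSum_of_hasFPowerSeriesOnBall_ofScalars hF'' hz'
  have sum_z₁ : HasSum (fun n : ℕ => n * u n * z ^ n) (z * deriv (₂F₁ a b c) z) :=
    hasSum_mul_pow_of_succ (by simp) (by simpa using sum₁)
  have sum_z₂ : HasSum (fun n : ℕ => n * ((n + 1) * u (n + 1)) * z ^ n)
      (z * deriv (deriv (₂F₁ a b c)) z) :=
    hasSum_mul_pow_of_succ (by simp) (by simpa using sum₂)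
  have sum_zz₂ : HasSum (fun n : ℕ => (n - 1) * (n * u n) * z ^ n)
      (z * (z * deriv (deriv (₂F₁ a b c)) z)) :=
    hasSum_mul_pow_of_succ (by simp) (by simpa using sum_z₂)
  have hsum := (((sum_z₂.sub sum_zz₂).add (sum₁.mul_left c)).sub
    (sum_z₁.mul_left (a + b + 1))).sub (sum₀.mul_left (a * b))
  have hzero := hsum.unique <| hasSum_zero.congr_fun fun n => by
    linear_combination z ^ n * ordinaryHypergeometricCoefficient_succ a b hc n
  rw [hypergeometricOp]
  linear_combination hzero

end HypergeometricEquation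

section RegularSingularPoint

variable {𝕜 : Type*} [NontriviallyNormedField 𝕜]

/-- The left-hand side of the second-order equation `xy'' + Qy' + Ry = 0`. When `Q` and `R` are
continuous at `0` it has a regular singular point there, with exponents `0` and `1 - Q(0)`. -/
noncomputable def regularSingularOp (Q R y : 𝕜 → 𝕜) (x : 𝕜) : 𝕜 :=
  x * deriv (deriv y) x + Q x * deriv y x + R x * y x

theorem regularSingularOp_of_deriv_eq_mul {Q R y v : 𝕜 → 𝕜} {x : 𝕜} (hy : DifferentiableAt 𝕜 y x)
    (hv : DifferentiableAt 𝕜 v x) (hyv : deriv y =ᶠ[𝓝 x] v * y) :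
    regularSingularOp Q R y x = (x * (deriv v x + v x ^ 2) + Q x * v x + R x) * y x := by
  rw [regularSingularOp, hyv.deriv_eq, deriv_mul hv hy, hyv.self_of_nhds, Pi.mul_apply]
  ring

theorem regularSingularOp_congr {Q R y₁ y₂ : 𝕜 → 𝕜} {x : 𝕜} (h : y₁ =ᶠ[𝓝 x] y₂) :
    regularSingularOp Q R y₁ x = regularSingularOp Q R y₂ x := by
  simp only [regularSingularOp, h.deriv.deriv_eq, h.deriv_eq, h.self_of_nhds]

variable [CompleteSpace 𝕜]

theorem regularSingularOp_sub {Q R y₁ y₂ : 𝕜 → 𝕜} {x : 𝕜} (h₁ : AnalyticAt 𝕜 y₁ x)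
    (h₂ : AnalyticAt 𝕜 y₂ x) :
    regularSingularOp Q R (y₁ - y₂) x =
      regularSingularOp Q R y₁ x - regularSingularOp Q R y₂ x := by
  have hderiv : deriv (y₁ - y₂) =ᶠ[𝓝 x] deriv y₁ - deriv y₂ := by
    filter_upwards [h₁.eventually_analyticAt, h₂.eventually_analyticAt] with t ht₁ ht₂
    exact deriv_sub ht₁.differentiableAt ht₂.differentiableAt
  have hderiv₂ : deriv (deriv (y₁ - y₂)) x = deriv (deriv y₁) x - deriv (deriv y₂) x :=
    hderiv.deriv_eq.trans (deriv_sub h₁.deriv.differentiableAt h₂.deriv.differentiableAt)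
  simp only [regularSingularOp, hderiv₂, hderiv.self_of_nhds, Pi.sub_apply]
  ring

theorem regularSingularOp_comp {a b c l x : 𝕜} {Q R F g : 𝕜 → 𝕜} (hF : AnalyticAt 𝕜 F (g x))
    (hg : AnalyticAt 𝕜 g x) (h₂ : x * deriv g x ^ 2 = l * (g x * (1 - g x)))
    (h₁ : x * deriv (deriv g) x + Q x * deriv g x = l * (c - (a + b + 1) * g x))
    (h₀ : R x = -l * (a * b)) :
    regularSingularOp Q R (F ∘ g) x = l * hypergeometricOp a b c F (g x) := by
  have hderiv : deriv (F ∘ g) =ᶠ[𝓝 x] (deriv F ∘ g) * deriv g := by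
    filter_upwards [hg.continuousAt.eventually hF.eventually_analyticAt,
      hg.eventually_analyticAt] with t hFt hgt
    exact deriv_comp t hFt.differentiableAt hgt.differentiableAt
  have hderiv₂ : deriv (deriv (F ∘ g)) x =
      deriv (deriv F) (g x) * deriv g x ^ 2 + deriv F (g x) * deriv (deriv g) x := by
    have hF' := hF.deriv.differentiableAt
    rw [hderiv.deriv_eq, deriv_mul (hF'.comp x hg.differentiableAt) hg.deriv.differentiableAt,
      deriv_comp x hF' hg.differentiableAt, Function.comp_apply]
    ring
  simp only [regularSingularOp, hypergeometricOp, hderiv₂, hderiv.self_of_nhds, Pi.mul_apply,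
    Function.comp_apply]
  linear_combination deriv (deriv F) (g x) * h₂ + deriv F (g x) * h₁ + F (g x) * h₀

theorem regularSingularOp_pow_succ_mul {Q R u : 𝕜 → 𝕜} {x : 𝕜} (hu : AnalyticAt 𝕜 u x) (m : ℕ) :
    regularSingularOp Q R (fun t => t ^ (m + 1) * u t) x =
      x ^ m * ((m + Q x) * ((m + 1) * u x + x * deriv u x) +
        x * ((m + 2) * deriv u x + x * deriv (deriv u) x) + x * R x * u x) := by
  have hderiv : deriv (fun t => t ^ (m + 1) * u t) =ᶠ[𝓝 x]
      fun t => t ^ m * ((m + 1) * u t + t * deriv u t) := by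
    filter_upwards [hu.eventually_analyticAt] with t ht
    rw [((hasDerivAt_pow (m + 1) t).fun_mul ht.differentiableAt.hasDerivAt).deriv]
    push_cast
    ring
  have hu' := hu.deriv.differentiableAt.hasDerivAt
  have hfactor := (hu.differentiableAt.hasDerivAt.const_mul (m + 1 : 𝕜)).fun_add
    ((hasDerivAt_id' x).fun_mul hu')
  have hpow : x * (m * x ^ (m - 1)) = m * x ^ m := by
    rcases m with _ | m <;> simp [pow_succ', mul_left_comm]
  rw [regularSingularOp, hderiv.deriv_eq, hderiv.self_of_nhds,
    ((hasDerivAt_pow m x).fun_mul hfactor).deriv]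
  linear_combination ((m + 1) * u x + x * deriv u x) * hpow

theorem eventually_eq_zero_of_regularSingularOp_eq_zero [CharZero 𝕜] {Q R y : 𝕜 → 𝕜}
    (hy : AnalyticAt 𝕜 y 0) (hQ : ContinuousAt Q 0) (hR : ContinuousAt R 0)
    (hQ₀ : ∀ n : ℕ, Q 0 ≠ -n) (hy₀ : y 0 = 0) (hode : ∀ᶠ x in 𝓝 0, regularSingularOp Q R y x = 0) :
    ∀ᶠ x in 𝓝 0, y x = 0 := by
  by_contra hne
  obtain ⟨n, u, hu, hu₀, hyu⟩ := hy.exists_eventuallyEq_pow_smul_nonzero_iff.2 hne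
  simp only [sub_zero, smul_eq_mul] at hyu
  obtain ⟨m, rfl⟩ : ∃ m, n = m + 1 := Nat.exists_eq_succ_of_ne_zero fun hn => hu₀ <| by
    simpa [hn, hy₀] using hyu.self_of_nhds.symm
  set B : 𝕜 → 𝕜 := fun x => (m + Q x) * ((m + 1) * u x + x * deriv u x) +
    x * ((m + 2) * deriv u x + x * deriv (deriv u) x) + x * R x * u x
  have hB : B =ᶠ[𝓝[≠] 0] 0 := by
    filter_upwards [(hyu.eventually_nhds.and (hode.and hu.eventually_analyticAt)).filter_mono
      nhdsWithin_le_nhds, self_mem_nhdsWithin] with x ⟨hyx, hx, hux⟩ hx₀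
    rw [regularSingularOp_congr hyx, regularSingularOp_pow_succ_mul hux] at hx
    exact (mul_eq_zero.1 hx).resolve_left (pow_ne_zero m hx₀)
  have hB_cont : ContinuousAt B 0 := by
    have := hu.continuousAt
    have := hu.deriv.continuousAt
    have := hu.deriv.deriv.continuousAt
    fun_prop
  have hB₀ : B 0 = 0 := tendsto_nhds_unique (hB_cont.tendsto.mono_left nhdsWithin_le_nhds)
    (tendsto_const_nhds.congr' hB.symm)
  have hindicial : (m + Q 0) * (m + 1) * u 0 = 0 := by simpa [B, mul_assoc] using hB₀
  have hQm : (m + Q 0 : 𝕜) ≠ 0 := fun h => hQ₀ m (eq_neg_of_add_eq_zero_right h)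
  exact mul_ne_zero (mul_ne_zero hQm m.cast_add_one_ne_zero) hu₀ hindicial

theorem eventuallyEq_of_regularSingularOp_eq_zero [CharZero 𝕜] {Q R y₁ y₂ : 𝕜 → 𝕜}
    (h₁ : AnalyticAt 𝕜 y₁ 0) (h₂ : AnalyticAt 𝕜 y₂ 0) (hQ : ContinuousAt Q 0)
    (hR : ContinuousAt R 0) (hQ₀ : ∀ n : ℕ, Q 0 ≠ -n) (h₀ : y₁ 0 = y₂ 0)
    (hode₁ : ∀ᶠ x in 𝓝 0, regularSingularOp Q R y₁ x = 0)
    (hode₂ : ∀ᶠ x in 𝓝 0, regularSingularOp Q R y₂ x = 0) : y₁ =ᶠ[𝓝 0] y₂ := by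
  have hsub := eventually_eq_zero_of_regularSingularOp_eq_zero (h₁.sub h₂) hQ hR hQ₀
    (sub_eq_zero.2 h₀) <| by
      filter_upwards [h₁.eventually_analyticAt, h₂.eventually_analyticAt, hode₁, hode₂]
        with x hx₁ hx₂ hy₁ hy₂
      rw [regularSingularOp_sub hx₁ hx₂, hy₁, hy₂, sub_zero]
  exact hsub.mono fun x => sub_eq_zero.1

end RegularSingularPoint

section Pullback

/-- The degree-four rational function `x(x + 4)³ / (4(2x - 1)³)` at which the hypergeometric
function is evaluated. -/
noncomputable def quarticArg (x : ℂ) : ℂ := x * (x + 4) ^ 3 / (4 * (2 * x - 1) ^ 3)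

/-- The coefficient of `y'` in the pullback of the hypergeometric equation along `quarticArg`,
normalised so that `y''` has coefficient `x`. -/
noncomputable def pullbackQ (x : ℂ) : ℂ := 4 / 3 + 2 * x / (x + 4) - 3 * x / (2 * x - 1)

/-- The coefficient of `y` in the pullback of the hypergeometric equation along `quarticArg`,
normalised so that `y''` has coefficient `x`. -/
noncomputable def pullbackR (x : ℂ) : ℂ := 7 * (x + 4) / (12 * (2 * x - 1) ^ 2)

/-- The claimed closed form `4(1 - 2x)^{3/4} / (4 + x)`, with the principal branch of the power. -/
noncomputable def closedForm (x : ℂ) : ℂ := 4 * (1 - 2 * x) ^ (3 / 4 : ℂ) / (4 + x)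

/-- The logarithmic derivative of `closedForm`. -/
noncomputable def closedFormLogDeriv (x : ℂ) : ℂ := -(3 / 2) / (1 - 2 * x) - 1 / (4 + x)

variable {x : ℂ}

theorem four_thirds_ne_neg_natCast (n : ℕ) : (4 / 3 : ℂ) ≠ -n := by
  intro h
  have hre := congrArg re h
  norm_num at hre
  linarith [n.cast_nonneg (α := ℝ)]

theorem deriv_quarticArg (hx : 2 * x - 1 ≠ 0) :
    deriv quarticArg x = (x + 4) ^ 2 * (x ^ 2 - 10 * x - 2) / (2 * (2 * x - 1) ^ 4) := by
  have hnum := (hasDerivAt_id' x).fun_mul (((hasDerivAt_id' x).add_const 4).fun_pow 3)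
  have hden := ((((hasDerivAt_id' x).const_mul 2).sub_const 1).fun_pow 3).const_mul 4
  have hx' : x * 2 - 1 ≠ 0 := by rwa [mul_comm]
  refine (hnum.fun_div hden (by simpa using hx)).deriv.trans ?_
  field_simp
  push_cast
  ring

theorem deriv_deriv_quarticArg (hx : 2 * x - 1 ≠ 0) :
    deriv (deriv quarticArg) x = 27 * (x + 4) * (5 * x + 2) / (2 * x - 1) ^ 5 := by
  have hcont : ContinuousAt (fun t : ℂ => 2 * t - 1) x := by fun_prop
  have hderiv : deriv quarticArg =ᶠ[𝓝 x]
      fun t => (t + 4) ^ 2 * (t ^ 2 - 10 * t - 2) / (2 * (2 * t - 1) ^ 4) :=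
    (hcont.eventually_ne hx).mono fun t => deriv_quarticArg
  have hnum := (((hasDerivAt_id' x).add_const 4).fun_pow 2).fun_mul
    ((((hasDerivAt_id' x).fun_pow 2).fun_sub ((hasDerivAt_id' x).const_mul 10)).sub_const 2)
  have hden := ((((hasDerivAt_id' x).const_mul 2).sub_const 1).fun_pow 4).const_mul 2
  have hx' : x * 2 - 1 ≠ 0 := by rwa [mul_comm]
  refine hderiv.deriv_eq.trans <| (hnum.fun_div hden (by simpa using hx)).deriv.trans ?_
  field_simp
  push_cast
  ring

theorem analyticAt_quarticArg (hx : 2 * x - 1 ≠ 0) : AnalyticAt ℂ quarticArg x := by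
  unfold quarticArg
  fun_prop (disch := simpa)

theorem one_sub_quarticArg (hx : 2 * x - 1 ≠ 0) :
    1 - quarticArg x = -(x ^ 2 - 10 * x - 2) ^ 2 / (4 * (2 * x - 1) ^ 3) := by
  have hx' : x * 2 - 1 ≠ 0 := by rwa [mul_comm]
  rw [quarticArg]
  field_simp
  ring

theorem regularSingularOp_ordinaryHypergeometric_comp_quarticArg (hx : 2 * x - 1 ≠ 0)
    (hx4 : x + 4 ≠ 0) (hg : ‖quarticArg x‖ < 1) :
    regularSingularOp pullbackQ pullbackR (₂F₁ (1 / 4) (7 / 12) (4 / 3 : ℂ) ∘ quarticArg) x =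
      0 := by
  have hx' : x * 2 - 1 ≠ 0 := by rwa [mul_comm]
  rw [regularSingularOp_comp (a := 1 / 4) (b := 7 / 12) (c := 4 / 3)
    (l := -4 * (x + 4) / (2 * x - 1) ^ 2) (analyticAt_ordinaryHypergeometric hg)
    (analyticAt_quarticArg hx),
    hypergeometricOp_ordinaryHypergeometric _ _ four_thirds_ne_neg_natCast hg, mul_zero]
  · rw [deriv_quarticArg hx, one_sub_quarticArg hx, quarticArg]
    field_simp
    ring
  · rw [deriv_quarticArg hx, deriv_deriv_quarticArg hx, pullbackQ, quarticArg]
    field_simp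
    ring
  · rw [pullbackR]
    field_simp

theorem hasDerivAt_closedForm (hx : 1 - 2 * x ∈ slitPlane) (hx4 : 4 + x ≠ 0) :
    HasDerivAt closedForm (closedFormLogDeriv x * closedForm x) x := by
  have hbase := ((hasDerivAt_id' x).const_mul (2 : ℂ)).const_sub 1
  have hx₀ := slitPlane_ne_zero hx
  refine (((hbase.cpow_const (c := 3 / 4) hx).const_mul 4).fun_div
    ((hasDerivAt_id' x).const_add 4) hx4).congr_deriv ?_
  rw [cpow_sub _ _ hx₀, cpow_one, closedForm, closedFormLogDeriv]
  field_simp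
  ring

theorem hasDerivAt_closedFormLogDeriv (hx : 1 - 2 * x ≠ 0) (hx4 : 4 + x ≠ 0) :
    HasDerivAt closedFormLogDeriv (-3 / (1 - 2 * x) ^ 2 + 1 / (4 + x) ^ 2) x := by
  have hbase := ((hasDerivAt_id' x).const_mul (2 : ℂ)).const_sub 1
  refine (((hasDerivAt_const x (-(3 / 2) : ℂ)).fun_div hbase hx).sub
    ((hasDerivAt_const x (1 : ℂ)).fun_div ((hasDerivAt_id' x).const_add 4) hx4)).congr_deriv ?_
  ring

theorem regularSingularOp_closedForm (hx : 1 - 2 * x ∈ slitPlane) (hx4 : 4 + x ≠ 0) :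
    regularSingularOp pullbackQ pullbackR closedForm x = 0 := by
  have hx₀ := slitPlane_ne_zero hx
  have hv := hasDerivAt_closedFormLogDeriv hx₀ hx4
  have hlog : deriv closedForm =ᶠ[𝓝 x] closedFormLogDeriv * closedForm := by
    have hcont : ContinuousAt (fun t : ℂ => 1 - 2 * t) x := by fun_prop
    have hcont4 : ContinuousAt (fun t : ℂ => 4 + t) x := by fun_prop
    filter_upwards [hcont.eventually_mem (isOpen_slitPlane.mem_nhds hx), hcont4.eventually_ne hx4]
      with t ht ht4
    exact (hasDerivAt_closedForm ht ht4).deriv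
  have hriccati : x * (deriv closedFormLogDeriv x + closedFormLogDeriv x ^ 2) +
      pullbackQ x * closedFormLogDeriv x + pullbackR x = 0 := by
    have hx' : 1 - x * 2 ≠ 0 := by rwa [mul_comm]
    rw [hv.deriv, closedFormLogDeriv, pullbackQ, pullbackR, ← neg_sub 1 (2 * x), neg_sq, div_neg,
      add_comm x 4]
    field_simp
    ring
  rw [regularSingularOp_of_deriv_eq_mul (hasDerivAt_closedForm hx hx4).differentiableAt
    hv.differentiableAt hlog, hriccati, zero_mul]

theorem analyticAt_closedForm (hx : 1 - 2 * x ∈ slitPlane) (hx4 : 4 + x ≠ 0) :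
    AnalyticAt ℂ closedForm x := by
  have hpow : AnalyticAt ℂ (fun t : ℂ => (1 - 2 * t) ^ (3 / 4 : ℂ)) x :=
    AnalyticAt.cpow (by fun_prop) analyticAt_const hx
  exact (analyticAt_const.mul hpow).div (by fun_prop) hx4

theorem ordinaryHypergeometric_comp_quarticArg_eventuallyEq :
    ₂F₁ (1 / 4) (7 / 12) (4 / 3 : ℂ) ∘ quarticArg =ᶠ[𝓝 0] closedForm := by
  have hg₀ : quarticArg 0 = 0 := by simp [quarticArg]
  have hg : AnalyticAt ℂ quarticArg 0 := analyticAt_quarticArg (by simp)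
  have hnear : ∀ᶠ x : ℂ in 𝓝 0, ‖quarticArg x‖ < 1 ∧ 1 - 2 * x ∈ slitPlane ∧ x + 4 ≠ 0 := by
    have hbase : ContinuousAt (fun t : ℂ => 1 - 2 * t) 0 := by fun_prop
    have hadd : ContinuousAt (fun t : ℂ => t + 4) 0 := by fun_prop
    exact (hg.continuousAt.norm.eventually_lt_const (by simp [hg₀])).and <|
      (hbase.eventually_mem (isOpen_slitPlane.mem_nhds (by simp))).and
        (hadd.eventually_ne (by simp))
  refine eventuallyEq_of_regularSingularOp_eq_zero (Q := pullbackQ) (R := pullbackR)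
    ((analyticAt_ordinaryHypergeometric (by simp [hg₀])).comp hg)
    (analyticAt_closedForm (by simp) (by simp)) ?_ ?_ ?_ ?_ ?_ ?_
  · unfold pullbackQ
    fun_prop (disch := norm_num)
  · unfold pullbackR
    fun_prop (disch := norm_num)
  · simpa [pullbackQ] using four_thirds_ne_neg_natCast
  · simp [hg₀, closedForm]
  · filter_upwards [hnear] with x ⟨hgx, hx, hx4⟩
    have hx' := slitPlane_ne_zero hx
    exact regularSingularOp_ordinaryHypergeometric_comp_quarticArg
      (sub_ne_zero.2 (sub_ne_zero.1 hx').symm) hx4 hgx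
  · filter_upwards [hnear] with x ⟨_, hx, hx4⟩
    exact regularSingularOp_closedForm hx (by rwa [add_comm])

end Pullback

theorem poch_eq_eval_ascPochhammer (a : ℂ) (k : ℕ) : poch a k = (ascPochhammer ℂ k).eval a := by
  induction k with
  | zero => simp [poch]
  | succ k ih => rw [ascPochhammer_succ_eval, ← ih, poch, poch, Finset.prod_range_succ]

theorem hypF_two_one (a b c z : ℂ) : hypF [a, b] [c] z = ₂F₁ a b c z := by
  rw [ordinaryHypergeometric_eq_tsum, hypF]
  refine tsum_congr fun k => ?_
  simp only [List.map_cons, List.map_nil, List.prod_cons, List.prod_nil, mul_one,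
    poch_eq_eval_ascPochhammer, ascPochhammer_eval_one, div_eq_mul_inv, mul_inv, smul_eq_mul]
  ring

theorem statement10_general : ∃ δ > (0 : ℝ), ∀ x : ℂ, ‖x‖ < δ →
    hypF [1 / 4, 7 / 12] [4 / 3] (x * (x + 4) ^ 3 / (4 * (2 * x - 1) ^ 3)) =
      4 * (1 - 2 * x) ^ (3 / 4 : ℂ) / (4 + x) := by
  obtain ⟨δ, hδ, h⟩ := Metric.eventually_nhds_iff.1
    ordinaryHypergeometric_comp_quarticArg_eventuallyEq
  refine ⟨δ, hδ, fun x hx => ?_⟩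
  rw [hypF_two_one]
  exact h (by simpa using hx)

/-- Near `x = 0`:
`₂F₁(1/4,7/12; 4/3; x(x+4)³/(4(2x−1)³)) = 4(1−2x)^{3/4}/(4+x)`,
with the positive real power. -/
theorem statement10 : ∃ δ > (0 : ℝ), ∀ x : ℝ, |x| < δ →
    hypF [1/4, 7/12] [4/3]
        (((x : ℂ) * ((x : ℂ) + 4) ^ 3) / (4 * (2 * (x : ℂ) - 1) ^ 3))
      = ((4 * (1 - 2 * x) ^ ((3 : ℝ)/4) / (4 + x) : ℝ) : ℂ) := by
  obtain ⟨δ, hδ, h⟩ := statement10_general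
  refine ⟨min δ (1 / 2), lt_min hδ one_half_pos, fun x hx => ?_⟩
  obtain ⟨hxδ, hx2⟩ := lt_min_iff.1 hx
  have hbase : 0 ≤ 1 - 2 * x := by linarith [le_abs_self x]
  rw [h x (by simpa using hxδ)]
  push_cast [Complex.ofReal_cpow hbase]
  rfl
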